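/- arXiv:2406.19318 — 5 statements merged into one kernel-verified Lean document; each statement's English description precedes it below -/
import Mathlib

section
/- Let U ⊆ ℂⁿ be an open set such that z_i ≠ z_j for all i ≠ j and all z ∈ U. Let γ : [0,1] → ℂ be a continuously differentiable loop (γ(0) = γ(1)), let W ⊆ ℂ × ℂⁿ be an open set containing γ([0,1]) × U, and let Ψ : W → ℂ be a holomorphic function satisfying Ψ(x,z)² · ∏_{i=1}^n (x − z_i) = 1 on W (in particular γ(t) ≠ z_i for all t and all z ∈ U). Define, for j = 1,…,n, the hyperelliptic integral I_j(z) = ∫_0^1 Ψ(γ(t),z)/(γ(t) − z_j) · γ′(t) dt. Then each I_j is holomorphic on U, I_1(z) + ⋯ + I_n(z) = 0 on U, and the vector I = (I_1,…,I_n)ᵀ satisfies the KZ equations on U: for every i and every k ≠ i, 2 ∂_{z_i} I_k = (I_i − I_k)/(z_i − z_k), and for every i, 2 ∂_{z_i} I_i = Σ_{j≠i} (I_j − I_i)/(z_i − z_j). -/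
/-!
Taking the logarithmic derivative of `Ψ² ∏ᵢ (x - zᵢ) = 1` gives
`dΨ = -(Ψ / 2) ∑ᵢ (dx - dzᵢ) / (x - zᵢ)` (`hasFDerivAt_master`). This explicit formula is continuous,
so one may differentiate `Iⱼ` under the integral sign (`hasFDerivAt_loopIntegral`), which gives
holomorphy. All the KZ equations then follow from it:

* along the loop, `∑ⱼ Ψ / (x - zⱼ) dx = -2 dΨ` is exact, so `∑ⱼ Iⱼ = 0`
  (`sum_loopIntegral_eq_zero`);
* for `i ≠ k`, `2 ∂_{zᵢ} (Ψ / (x - z_k)) = Ψ / ((x - zᵢ)(x - z_k))`, and partial fractions turn this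
  into the off-diagonal equation already for the integrands (`master_div_deriv_single`);
* the diagonal equation is obtained by differentiating `∑ⱼ Iⱼ = 0` in `zᵢ` and inserting the
  off-diagonal ones.
-/

noncomputable section
open Finset intervalIntegral

/-- Differentiation under the integral sign for `z ↦ ∫ G(γ(t), z) γ'(t) dt`, where `G` is
holomorphic with continuous derivative `G'` on an open set `W ⊇ γ([0,1]) × U`.  The derivative is
stated directionally. Compactness of `[0,1]` times a closed ball in `U` supplies the dominating
constant. -/
theorem hasFDerivAt_loopIntegral {H : Type*} [NormedAddCommGroup H] [NormedSpace ℂ H]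
    [ProperSpace H] {U : Set H} (hU : IsOpen U) {γ : ℝ → ℂ} (hγ : ContDiff ℝ 1 γ)
    {W : Set (ℂ × H)} (hWmem : ∀ t ∈ Set.Icc (0:ℝ) 1, ∀ z ∈ U, (γ t, z) ∈ W)
    {G : ℂ × H → ℂ} {G' : ℂ × H → (ℂ × H →L[ℂ] ℂ)}
    (hG : ∀ w ∈ W, HasFDerivAt G (G' w) w) (hG' : ContinuousOn G' W) {z : H} (hz : z ∈ U) :
    ∃ L : H →L[ℂ] ℂ, HasFDerivAt (fun z => ∫ t in (0:ℝ)..1, G (γ t, z) * deriv γ t) L z ∧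
      ∀ v, L v = ∫ t in (0:ℝ)..1, G' (γ t, z) (0, v) * deriv γ t := by
  have hdγ : Continuous (deriv γ) := hγ.continuous_deriv le_rfl
  have hγc : Continuous γ := hγ.continuous
  have hGc : ContinuousOn G W := fun w hw => (hG w hw).continuousAt.continuousWithinAt
  let F' : H → ℝ → (H →L[ℂ] ℂ) := fun z t =>
    deriv γ t • (G' (γ t, z)).comp (ContinuousLinearMap.inr ℂ ℂ H)
  obtain ⟨r, hr, hrU⟩ := Metric.nhds_basis_closedBall.mem_iff.1 (hU.mem_nhds hz)
  have hFcont : ∀ z ∈ U, ContinuousOn (fun t => G (γ t, z) * deriv γ t) (Set.Icc 0 1) := by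
    intro z hz
    refine ContinuousOn.mul ?_ hdγ.continuousOn
    exact hGc.comp (f := fun t : ℝ => (γ t, z)) (by fun_prop) (fun t ht => hWmem t ht z hz)
  have hF'cont : ContinuousOn (fun p : ℝ × H => F' p.2 p.1) (Set.Icc 0 1 ×ˢ U) := by
    refine ContinuousOn.fun_smul (hdγ.comp continuous_fst).continuousOn
      (ContinuousOn.clm_comp ?_ continuousOn_const)
    exact hG'.comp (f := fun p : ℝ × H => (γ p.1, p.2)) (by fun_prop)
      (fun p hp => hWmem p.1 hp.1 p.2 hp.2)
  have hF'z : ContinuousOn (F' z) (Set.Icc 0 1) :=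
    hF'cont.comp (f := fun t : ℝ => (t, z)) (by fun_prop) (fun t ht => ⟨ht, hz⟩)
  obtain ⟨C, hC⟩ := (isCompact_Icc.prod (isCompact_closedBall z r)).exists_bound_of_continuousOn
    (hF'cont.mono (Set.prod_mono le_rfl hrU))
  have hsub : Set.uIoc (0:ℝ) 1 ⊆ Set.Icc 0 1 := by
    rw [Set.uIoc_of_le zero_le_one]; exact Set.Ioc_subset_Icc_self
  have hint : IntervalIntegrable (F' z) MeasureTheory.volume 0 1 :=
    ContinuousOn.intervalIntegrable_of_Icc zero_le_one hF'z
  refine ⟨∫ t in (0:ℝ)..1, F' z t, ?_, ?_⟩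
  · refine hasFDerivAt_integral_of_dominated_of_fderiv_le (bound := fun _ => C)
      (Metric.closedBall_mem_nhds z hr) ?_ ?_ ?_ ?_ ?_ ?_
    · filter_upwards [hU.mem_nhds hz] with y hy
      exact ((hFcont y hy).mono hsub).aestronglyMeasurable measurableSet_uIoc
    · exact ContinuousOn.intervalIntegrable_of_Icc zero_le_one (hFcont z hz)
    · exact (hF'z.mono hsub).aestronglyMeasurable measurableSet_uIoc
    · exact Filter.Eventually.of_forall fun t ht x hx => hC (t, x) ⟨hsub ht, hx⟩
    · exact intervalIntegrable_const
    · refine Filter.Eventually.of_forall fun t ht x hx => ?_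
      have h := (hG _ (hWmem t (hsub ht) x (hrU hx))).comp x (hasFDerivAt_prodMk_right (γ t) x)
      exact h.mul_const (deriv γ t)
  · intro v
    rw [ContinuousLinearMap.intervalIntegral_apply hint]
    refine integral_congr fun t _ => ?_
    simp [F', mul_comm]

/-- The linear functional `(x, z) ↦ x - zᵢ`. -/
def diffCoord {n : ℕ} (i : Fin n) : ℂ × (Fin n → ℂ) →L[ℂ] ℂ :=
  ContinuousLinearMap.fst ℂ ℂ (Fin n → ℂ) -
    (ContinuousLinearMap.proj (R := ℂ) (φ := fun _ : Fin n => ℂ) i).comp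
      (ContinuousLinearMap.snd ℂ ℂ (Fin n → ℂ))

@[simp]
theorem diffCoord_apply {n : ℕ} (i : Fin n) (v : ℂ × (Fin n → ℂ)) :
    diffCoord i v = v.1 - v.2 i := by
  simp [diffCoord]

theorem hasFDerivAt_diffCoord {n : ℕ} (i : Fin n) (w : ℂ × (Fin n → ℂ)) :
    HasFDerivAt (fun w : ℂ × (Fin n → ℂ) => w.1 - w.2 i) (diffCoord i) w := by
  have h : (fun w : ℂ × (Fin n → ℂ) => w.1 - w.2 i) = diffCoord i :=
    funext fun w => (diffCoord_apply i w).symm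
  rw [h]
  exact (diffCoord i).hasFDerivAt

/-- The derivative of the master function at `w = (x, z)`,
`dΨ = -(Ψ / 2) ∑ᵢ (dx - dzᵢ) / (x - zᵢ)`. -/
def masterDeriv {n : ℕ} (Ψ : ℂ × (Fin n → ℂ) → ℂ) (w : ℂ × (Fin n → ℂ)) :
    ℂ × (Fin n → ℂ) →L[ℂ] ℂ :=
  ∑ i, (-(Ψ w / 2) / (w.1 - w.2 i)) • diffCoord i

theorem masterDeriv_apply {n : ℕ} (Ψ : ℂ × (Fin n → ℂ) → ℂ) (w v : ℂ × (Fin n → ℂ)) :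
    masterDeriv Ψ w v = ∑ i, -(Ψ w / 2) / (w.1 - w.2 i) * (v.1 - v.2 i) := by
  simp [masterDeriv]

section Master

variable {n : ℕ} {W : Set (ℂ × (Fin n → ℂ))} {Ψ : ℂ × (Fin n → ℂ) → ℂ}

theorem sub_ne_zero_of_master
    (hmaster : ∀ w ∈ W, Ψ w ^ 2 * ∏ i : Fin n, (w.1 - w.2 i) = 1)
    {w : ℂ × (Fin n → ℂ)} (hw : w ∈ W) (i : Fin n) : w.1 - w.2 i ≠ 0 := by
  intro h
  have := hmaster w hw
  rw [prod_eq_zero (mem_univ i) h] at this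
  simp at this

/-- The logarithmic derivative of the relation `Ψ² ∏ᵢ (x - zᵢ) = 1`. -/
theorem hasFDerivAt_master (hW : IsOpen W) (hΨ : DifferentiableOn ℂ Ψ W)
    (hmaster : ∀ w ∈ W, Ψ w ^ 2 * ∏ i : Fin n, (w.1 - w.2 i) = 1)
    {w : ℂ × (Fin n → ℂ)} (hw : w ∈ W) : HasFDerivAt Ψ (masterDeriv Ψ w) w := by
  have hne := sub_ne_zero_of_master hmaster hw
  have hd := (hΨ.differentiableAt (hW.mem_nhds hw)).hasFDerivAt
  have hlin : ∀ i ∈ (univ : Finset (Fin n)),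
      HasFDerivAt (fun w : ℂ × (Fin n → ℂ) => w.1 - w.2 i) (diffCoord i) w :=
    fun i _ => hasFDerivAt_diffCoord i w
  have hprod := (hd.pow 2).mul (HasFDerivAt.finsetProd hlin)
  have hconst : HasFDerivAt (fun w => Ψ w ^ 2 * ∏ i : Fin n, (w.1 - w.2 i))
      (0 : ℂ × (Fin n → ℂ) →L[ℂ] ℂ) w :=
    (hasFDerivAt_const (1:ℂ) w).congr_of_eventuallyEq
      (Filter.eventually_of_mem (hW.mem_nhds hw) hmaster)
  have heq := hprod.unique hconst
  have hm := hmaster w hw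
  convert hd using 1
  refine ContinuousLinearMap.ext fun v => ?_
  have hv := DFunLike.congr_fun heq v
  have herase : ∀ i, ∏ j ∈ univ.erase i, (w.1 - w.2 j) =
      (∏ j, (w.1 - w.2 j)) / (w.1 - w.2 i) := fun i => by
    rw [eq_div_iff (hne i), prod_erase_mul _ _ (mem_univ i)]
  simp [herase] at hv
  have hP : ∑ i, (∏ j, (w.1 - w.2 j)) / (w.1 - w.2 i) * (v.1 - v.2 i) =
      (∏ j, (w.1 - w.2 j)) * ∑ i, (v.1 - v.2 i) / (w.1 - w.2 i) := by
    rw [mul_sum]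
    exact sum_congr rfl fun i _ => by ring
  have hM : masterDeriv Ψ w v = -(Ψ w / 2) * ∑ i, (v.1 - v.2 i) / (w.1 - w.2 i) := by
    rw [masterDeriv_apply, mul_sum]
    exact sum_congr rfl fun i _ => by ring
  rw [hP] at hv
  rw [hM]
  linear_combination -(Ψ w / 2) * hv +
    (Ψ w / 2 * (∑ i, (v.1 - v.2 i) / (w.1 - w.2 i)) + fderiv ℂ Ψ w v) * hm

theorem continuousOn_masterDeriv (hΨ : DifferentiableOn ℂ Ψ W)
    (hmaster : ∀ w ∈ W, Ψ w ^ 2 * ∏ i : Fin n, (w.1 - w.2 i) = 1) :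
    ContinuousOn (masterDeriv Ψ) W := by
  have hc := hΨ.continuousOn
  refine continuousOn_finsetSum _ fun i _ => ContinuousOn.fun_smul ?_ continuousOn_const
  exact ContinuousOn.div (hc.div_const 2).neg (by fun_prop)
    fun w hw => sub_ne_zero_of_master hmaster hw i

theorem hasFDerivAt_master_div (hW : IsOpen W) (hΨ : DifferentiableOn ℂ Ψ W)
    (hmaster : ∀ w ∈ W, Ψ w ^ 2 * ∏ i : Fin n, (w.1 - w.2 i) = 1) (j : Fin n)
    {w : ℂ × (Fin n → ℂ)} (hw : w ∈ W) :
    HasFDerivAt (fun w => Ψ w / (w.1 - w.2 j))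
      ((w.1 - w.2 j)⁻¹ • masterDeriv Ψ w - (Ψ w / (w.1 - w.2 j) ^ 2) • diffCoord j) w := by
  have hne := sub_ne_zero_of_master hmaster hw j
  have h := (hasFDerivAt_master hW hΨ hmaster hw).mul
    ((hasDerivAt_inv hne).comp_hasFDerivAt w (hasFDerivAt_diffCoord j w))
  refine HasFDerivAt.congr_fderiv h ?_
  refine ContinuousLinearMap.ext fun v => ?_
  simp
  field_simp
  ring

theorem continuousOn_master_div (hΨ : DifferentiableOn ℂ Ψ W)
    (hmaster : ∀ w ∈ W, Ψ w ^ 2 * ∏ i : Fin n, (w.1 - w.2 i) = 1) (j : Fin n) :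
    ContinuousOn (fun w => Ψ w / (w.1 - w.2 j)) W :=
  hΨ.continuousOn.div (by fun_prop) fun _ hw => sub_ne_zero_of_master hmaster hw j

theorem continuousOn_master_div_deriv (hΨ : DifferentiableOn ℂ Ψ W)
    (hmaster : ∀ w ∈ W, Ψ w ^ 2 * ∏ i : Fin n, (w.1 - w.2 i) = 1) (j : Fin n) :
    ContinuousOn (fun w => (w.1 - w.2 j)⁻¹ • masterDeriv Ψ w -
      (Ψ w / (w.1 - w.2 j) ^ 2) • diffCoord j) W := by
  have hne : ∀ w ∈ W, w.1 - w.2 j ≠ 0 := fun w hw => sub_ne_zero_of_master hmaster hw j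
  refine ContinuousOn.sub (ContinuousOn.fun_smul (ContinuousOn.inv₀ (by fun_prop) hne)
    (continuousOn_masterDeriv hΨ hmaster)) (ContinuousOn.fun_smul ?_ continuousOn_const)
  exact hΨ.continuousOn.div (by fun_prop) fun w hw => pow_ne_zero 2 (hne w hw)

/-- Partial fractions: for `i ≠ k`, twice the `zᵢ`-derivative of `Ψ / (x - z_k)` is
`Ψ / ((x - zᵢ)(x - z_k))`, which is the KZ right-hand side at the level of integrands. -/
theorem master_div_deriv_single
    (hmaster : ∀ w ∈ W, Ψ w ^ 2 * ∏ i : Fin n, (w.1 - w.2 i) = 1) {i k : Fin n} (hik : i ≠ k)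
    {w : ℂ × (Fin n → ℂ)} (hw : w ∈ W) (hz : w.2 i ≠ w.2 k) :
    ((w.1 - w.2 k)⁻¹ • masterDeriv Ψ w - (Ψ w / (w.1 - w.2 k) ^ 2) • diffCoord k)
        (0, Pi.single i 1) =
      (Ψ w / (w.1 - w.2 i) - Ψ w / (w.1 - w.2 k)) / (2 * (w.2 i - w.2 k)) := by
  have hi := sub_ne_zero_of_master hmaster hw i
  have hk := sub_ne_zero_of_master hmaster hw k
  have hz' := sub_ne_zero.2 hz
  have hsum : masterDeriv Ψ w (0, Pi.single i 1) = Ψ w / 2 / (w.1 - w.2 i) := by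
    rw [masterDeriv_apply, sum_eq_single i]
    · simp; ring
    · intro j _ hj
      simp [Pi.single_eq_of_ne hj]
    · simp
  simp only [sub_apply, smul_apply, hsum, diffCoord_apply,
    Pi.single_eq_of_ne hik.symm, smul_eq_mul]
  field_simp
  ring

/-- `∑ⱼ Ψ / (x - zⱼ) dx = -2 dΨ` for fixed `z`, so its integral over a closed loop vanishes. -/
theorem sum_loopIntegral_eq_zero (hW : IsOpen W) (hΨ : DifferentiableOn ℂ Ψ W)
    (hmaster : ∀ w ∈ W, Ψ w ^ 2 * ∏ i : Fin n, (w.1 - w.2 i) = 1)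
    {γ : ℝ → ℂ} (hγ : ContDiff ℝ 1 γ) (hloop : γ 0 = γ 1) {z : Fin n → ℂ}
    (hz : ∀ t ∈ Set.Icc (0:ℝ) 1, (γ t, z) ∈ W) :
    ∑ j, ∫ t in (0:ℝ)..1, Ψ (γ t, z) / (γ t - z j) * deriv γ t = 0 := by
  have hdγ : Continuous (deriv γ) := hγ.continuous_deriv le_rfl
  have hγc : Continuous γ := hγ.continuous
  have hcont : ∀ j, ContinuousOn (fun t => Ψ (γ t, z) / (γ t - z j) * deriv γ t)
      (Set.Icc 0 1) := fun j =>
    ((continuousOn_master_div hΨ hmaster j).comp (f := fun t : ℝ => (γ t, z))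
      (by fun_prop) hz).mul hdγ.continuousOn
  have hint : ∀ j, IntervalIntegrable (fun t => Ψ (γ t, z) / (γ t - z j) * deriv γ t)
      MeasureTheory.volume 0 1 := fun j =>
    ContinuousOn.intervalIntegrable_of_Icc zero_le_one (hcont j)
  rw [← integral_finsetSum fun j _ => hint j]
  rw [integral_eq_sub_of_hasDerivAt (f := fun t => -2 * Ψ (γ t, z))]
  · simp [hloop]
  · intro t ht
    rw [Set.uIcc_of_le zero_le_one] at ht
    have hγt : HasDerivAt γ (deriv γ t) t :=
      (hγ.differentiable one_ne_zero t).hasDerivAt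
    have h := (((hasFDerivAt_master hW hΨ hmaster (hz t ht)).restrictScalars ℝ).comp_hasDerivAt t
      (hγt.prodMk (hasDerivAt_const t z))).const_mul (-2)
    refine HasDerivAt.congr_deriv h ?_
    simp [masterDeriv_apply, mul_sum]
    rw [← sum_neg_distrib]
    refine sum_congr rfl fun j _ => ?_
    ring
  · exact ContinuousOn.intervalIntegrable_of_Icc zero_le_one
      (continuousOn_finsetSum _ fun j _ => hcont j)

end Master

/-- hyperelliptic integrals over a C¹ loop `γ` of the master function `Ψ`
(a holomorphic branch of `(∏ (x - z_i))^{-1/2}` on an open set `W` containing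
`γ([0,1]) × U`) are holomorphic on `U`, sum to zero, and satisfy the KZ equations
(with `κ = 2`) on `U`; here `n = 2g+1`. -/
theorem hyperelliptic_integrals_solve_KZ
    (g : ℕ) (hg : 1 ≤ g)
    (U : Set (Fin (2*g+1) → ℂ)) (hU : IsOpen U)
    (hdist : ∀ z ∈ U, ∀ i j : Fin (2*g+1), i ≠ j → z i ≠ z j)
    (γ : ℝ → ℂ) (hγ : ContDiff ℝ 1 γ) (hloop : γ 0 = γ 1)
    (W : Set (ℂ × (Fin (2*g+1) → ℂ))) (hW : IsOpen W)
    (hWmem : ∀ t ∈ Set.Icc (0:ℝ) 1, ∀ z ∈ U, (γ t, z) ∈ W)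
    (Ψ : ℂ × (Fin (2*g+1) → ℂ) → ℂ) (hΨ : DifferentiableOn ℂ Ψ W)
    (hmaster : ∀ w ∈ W, Ψ w ^ 2 * ∏ i : Fin (2*g+1), (w.1 - w.2 i) = 1)
    (I : Fin (2*g+1) → (Fin (2*g+1) → ℂ) → ℂ)
    (hI : ∀ j, ∀ z ∈ U, I j z = ∫ t in (0:ℝ)..1, Ψ (γ t, z) / (γ t - z j) * deriv γ t) :
    (∀ j, DifferentiableOn ℂ (I j) U) ∧
    (∀ z ∈ U, ∑ j : Fin (2*g+1), I j z = 0) ∧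
    (∀ z ∈ U, ∀ i k : Fin (2*g+1), i ≠ k →
      2 * fderiv ℂ (I k) z (Pi.single i 1) = (I i z - I k z) / (z i - z k)) ∧
    (∀ z ∈ U, ∀ i : Fin (2*g+1),
      2 * fderiv ℂ (I i) z (Pi.single i 1) =
        ∑ j ∈ univ \ {i}, (I j z - I i z) / (z i - z j)) := by
  have hDeriv := fun (j : Fin (2*g+1)) (z : Fin (2*g+1) → ℂ) (hz : z ∈ U) =>
    hasFDerivAt_loopIntegral hU hγ hWmem
      (fun w hw => hasFDerivAt_master_div hW hΨ hmaster j hw)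
      (continuousOn_master_div_deriv hΨ hmaster j) hz
  have hIeq : ∀ j, ∀ z ∈ U, I j =ᶠ[nhds z]
      fun z => ∫ t in (0:ℝ)..1, Ψ (γ t, z) / (γ t - z j) * deriv γ t := fun j z hz =>
    Filter.eventually_of_mem (hU.mem_nhds hz) (hI j)
  have hdiff : ∀ j, ∀ z ∈ U, DifferentiableAt ℂ (I j) z := fun j z hz => by
    obtain ⟨L, hL, -⟩ := hDeriv j z hz
    exact (hL.congr_of_eventuallyEq (hIeq j z hz)).differentiableAt
  have hsum : ∀ z ∈ U, ∑ j, I j z = 0 := fun z hz => by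
    rw [sum_congr rfl fun j _ => hI j z hz]
    exact sum_loopIntegral_eq_zero hW hΨ hmaster hγ hloop fun t ht => hWmem t ht z hz
  have hoff : ∀ z ∈ U, ∀ i k : Fin (2*g+1), i ≠ k →
      2 * fderiv ℂ (I k) z (Pi.single i 1) = (I i z - I k z) / (z i - z k) := by
    intro z hz i k hik
    obtain ⟨L, hL, hLv⟩ := hDeriv k z hz
    have hint : ∀ j, IntervalIntegrable (fun t => Ψ (γ t, z) / (γ t - z j) * deriv γ t)
        MeasureTheory.volume 0 1 := fun j =>
      ContinuousOn.intervalIntegrable_of_Icc zero_le_one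
        (((continuousOn_master_div hΨ hmaster j).comp (f := fun t : ℝ => (γ t, z))
          (hγ.continuous.prodMk continuous_const).continuousOn
          fun t ht => hWmem t ht z hz).mul (hγ.continuous_deriv le_rfl).continuousOn)
    rw [(hL.congr_of_eventuallyEq (hIeq k z hz)).fderiv, hLv, hI i z hz, hI k z hz,
      ← integral_sub (hint i) (hint k), ← integral_const_mul, ← integral_div]
    refine integral_congr fun t ht => ?_
    rw [Set.uIcc_of_le zero_le_one] at ht
    have hne := hdist z hz i k hik
    have hz' := sub_ne_zero.2 hne
    simp only
    rw [master_div_deriv_single hmaster hik (hWmem t ht z hz) hne]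
    field_simp
  refine ⟨fun j z hz => (hdiff j z hz).differentiableWithinAt, hsum, hoff, ?_⟩
  intro z hz i
  -- Differentiating `∑ⱼ Iⱼ = 0` along `zᵢ` reduces the diagonal equation to the others.
  have hzero : ∑ j, fderiv ℂ (I j) z (Pi.single i 1) = 0 := by
    have h1 := HasFDerivAt.fun_sum (u := univ) fun j _ => (hdiff j z hz).hasFDerivAt
    have h2 : HasFDerivAt (fun z => ∑ j, I j z) (0 : (Fin (2*g+1) → ℂ) →L[ℂ] ℂ) z :=
      (hasFDerivAt_const (0:ℂ) z).congr_of_eventuallyEq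
        (Filter.eventually_of_mem (hU.mem_nhds hz) hsum)
    simpa using DFunLike.congr_fun (h1.unique h2) (Pi.single i 1)
  rw [sdiff_singleton_eq_erase, ← sum_erase_add _ _ (mem_univ i)] at *
  rw [eq_neg_of_add_eq_zero_right hzero, mul_neg, mul_sum, ← sum_neg_distrib]
  refine sum_congr rfl fun j hj => ?_
  rw [hoff z hz i j (ne_of_mem_erase hj).symm, ← neg_div, neg_sub]
end
end

section
/- For every integer s ≥ 1 and every ℓ ∈ {1,…,g}, the p^s-hypergeometric vector Q^{s,ℓ} satisfies the KZ differential equations modulo p^s: in the polynomial ring ℤ[z_1,…,z_n], for all i ≠ k one has 2 (z_i − z_k) ∂_{z_i} Q^{s,ℓ}_k − (Q^{s,ℓ}_i − Q^{s,ℓ}_k) ≡ 0 (mod p^s), and for every i one has 2 (∏_{j≠i} (z_i − z_j)) ∂_{z_i} Q^{s,ℓ}_i − Σ_{j≠i} (Q^{s,ℓ}_j − Q^{s,ℓ}_i) ∏_{m≠i,j} (z_i − z_m) ≡ 0 (mod p^s). -/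
/-!
Write `M = (p^s - 1)/2`, so that `2M + 1 = p^s`, and `F_k = Φ_s/(x - z_k)`; all congruences are
modulo `p^s`, and `Q_k` is the coefficient of `x^{ℓ p^s - 1}` in `F_k`.

For `i ≠ k` put `G = Φ_s / ((x - z_i)(x - z_k))`. Then `∂_i F_k = -M G` and
`F_i - F_k = (z_i - z_k) G`, so that
`2 (z_i - z_k) ∂_i F_k - (F_i - F_k) = -p^s (z_i - z_k) G`. The off-diagonal equations follow by
taking coefficients.

For the diagonal ones, `F_i` depends only on the differences `x - z_j`, hence is killed by
`∂_x + ∑_j ∂_j` (`translation_masterPolyDiv`). The coefficient of `x^{ℓ p^s - 1}` in any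
`x`-derivative is a multiple of `ℓ p^s`, so `∑_j ∂_j Q_i ≡ 0`. Solving for `∂_i Q_i` and inserting
the off-diagonal equations for `∂_j Q_i`, `j ≠ i`, gives the claim.
-/

noncomputable section
open MvPolynomial Finset

/-- The master polynomial `Φ_s(x,z) = ∏_{i=1}^n (x - z_i)^{(p^s-1)/2}`,
viewed as a polynomial in `x` over `ℤ[z_1,…,z_n]`, where `n = 2g+1`. -/
def masterPoly (p g s : ℕ) : Polynomial (MvPolynomial (Fin (2*g+1)) ℤ) :=
  ∏ i : Fin (2*g+1), (Polynomial.X - Polynomial.C (X i)) ^ ((p ^ s - 1) / 2)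

/-- The polynomial `Φ_s(x,z)/(x - z_i)`. -/
def masterPolyDiv (p g s : ℕ) (i : Fin (2*g+1)) :
    Polynomial (MvPolynomial (Fin (2*g+1)) ℤ) :=
  (Polynomial.X - Polynomial.C (X i)) ^ ((p ^ s - 1) / 2 - 1) *
    ∏ j ∈ univ \ {i}, (Polynomial.X - Polynomial.C (X j)) ^ ((p ^ s - 1) / 2)

/-- The `i`-th component `Q^{s,ℓ}_i ∈ ℤ[z_1,…,z_n]` of the `p^s`-hypergeometric vector:
the coefficient of `x^{ℓ p^s - 1}` in `Φ_s(x,z)/(x - z_i)`. -/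
def Qhyp (p g s ℓ : ℕ) (i : Fin (2*g+1)) : MvPolynomial (Fin (2*g+1)) ℤ :=
  (masterPolyDiv p g s i).coeff (ℓ * p ^ s - 1)

/-- The partial derivative `∂/∂z_i` acting on polynomials in `x` over `ℤ[z]`, coefficient by
coefficient. -/
def zDeriv {σ : Type*} (i : σ) :
    Derivation ℤ (Polynomial (MvPolynomial σ ℤ)) (Polynomial (MvPolynomial σ ℤ)) :=
  PolynomialModule.equivPolynomialSelf.toLinearMap.compDer (pderiv i).mapCoeffs

lemma coeff_zDeriv {σ : Type*} (i : σ) (f : Polynomial (MvPolynomial σ ℤ)) (n : ℕ) :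
    (zDeriv i f).coeff n = pderiv i (f.coeff n) := rfl

lemma zDeriv_X_sub_C {σ : Type*} [DecidableEq σ] (i j : σ) :
    zDeriv i (Polynomial.X - Polynomial.C (X j)) = if i = j then -1 else 0 := by
  ext1 n
  rw [coeff_zDeriv, Polynomial.coeff_sub, Polynomial.coeff_X, Polynomial.coeff_C, map_sub]
  rcases n with _ | n
  · by_cases h : i = j
    · subst h; simp
    · simp [h, pderiv_X_of_ne (Ne.symm h)]
  · have h1 : pderiv i (if 1 = n + 1 then (1 : MvPolynomial σ ℤ) else 0) = 0 := by
      split_ifs <;> simp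
    rw [h1]
    by_cases h : i = j <;> simp [h, Polynomial.coeff_one]

lemma derivation_pow_eq_zero {R A : Type*} [CommRing R] [CommRing A] [Algebra R A]
    (D : Derivation R A A) {a : A} (h : D a = 0) (n : ℕ) : D (a ^ n) = 0 := by
  simp [Derivation.leibniz_pow, h]

lemma derivation_prod_eq_zero {R A ι : Type*} [CommRing R] [CommRing A] [Algebra R A]
    (D : Derivation R A A) (t : Finset ι) (f : ι → A) (h : ∀ j ∈ t, D (f j) = 0) :
    D (∏ j ∈ t, f j) = 0 :=
  Finset.prod_induction f (fun a => D a = 0) (fun a b ha hb => by simp [ha, hb]) (by simp) h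

/-- `Φ_s/(x - z_i)` is invariant under simultaneous translation of `x` and all the `z_j`. -/
lemma translation_masterPolyDiv (p g s : ℕ) (i : Fin (2*g+1)) :
    Polynomial.derivative (masterPolyDiv p g s i) +
      ∑ j, zDeriv j (masterPolyDiv p g s i) = 0 := by
  let D : Derivation ℤ (Polynomial (MvPolynomial (Fin (2*g+1)) ℤ))
      (Polynomial (MvPolynomial (Fin (2*g+1)) ℤ)) :=
    (Polynomial.derivative' (R := MvPolynomial (Fin (2*g+1)) ℤ)).restrictScalars ℤ +
      ∑ j, zDeriv j
  have hD : ∀ f, D f = Polynomial.derivative f + ∑ j, zDeriv j f := by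
    intro f
    have hsum : ∀ t : Finset (Fin (2*g+1)), (∑ j ∈ t, zDeriv j) f = ∑ j ∈ t, zDeriv j f := by
      intro t
      induction t using Finset.induction_on with
      | empty => simp
      | insert a t ha ih => simp [Finset.sum_insert ha, ih]
    rw [Derivation.add_apply, hsum]
    rfl
  have hL : ∀ j : Fin (2*g+1), D (Polynomial.X - Polynomial.C (X j)) = 0 := by
    intro j
    rw [hD]
    simp [zDeriv_X_sub_C]
  rw [← hD, masterPolyDiv, Derivation.leibniz, derivation_pow_eq_zero D (hL i),
    derivation_prod_eq_zero D _ _ (fun j _ => derivation_pow_eq_zero D (hL j) _)]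
  simp

/-- The identity `2 (z_i - z_k) ∂_i F_k - (F_i - F_k) = -p^s (z_i - z_k) G`, stated as the
existence of the quotient. -/
lemma offDiag_masterPolyDiv (p g s : ℕ) (hp : p.Prime) (hodd : p ≠ 2) (hs : 1 ≤ s)
    (i k : Fin (2*g+1)) (hik : i ≠ k) :
    ∃ H : Polynomial (MvPolynomial (Fin (2*g+1)) ℤ),
      Polynomial.C (2 * (X i - X k)) * zDeriv i (masterPolyDiv p g s k)
        - (masterPolyDiv p g s i - masterPolyDiv p g s k)
        = Polynomial.C ((p : MvPolynomial (Fin (2*g+1)) ℤ) ^ s) * H := by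
  obtain ⟨M, hM⟩ : ∃ M, p ^ s = 2 * (M + 1) + 1 := by
    obtain ⟨m, hm⟩ := (hp.odd_of_ne_two hodd).pow (n := s)
    have h1 : 1 < p ^ s := Nat.one_lt_pow (by omega) hp.one_lt
    exact ⟨m - 1, by omega⟩
  have hM1 : (p ^ s - 1) / 2 = M + 1 := by omega
  have hpR : (p : MvPolynomial (Fin (2*g+1)) ℤ) ^ s = 2 * (M + 1) + 1 := by
    exact_mod_cast congrArg (Nat.cast (R := MvPolynomial (Fin (2*g+1)) ℤ)) hM
  set P := ∏ j ∈ univ \ {i, k},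
    (Polynomial.X - Polynomial.C (X j : MvPolynomial (Fin (2*g+1)) ℤ)) ^ (M + 1) with hP
  have hFk : masterPolyDiv p g s k = (Polynomial.X - Polynomial.C (X k)) ^ M *
      ((Polynomial.X - Polynomial.C (X i)) ^ (M + 1) * P) := by
    have h : (univ \ {k} : Finset (Fin (2*g+1))) = insert i (univ \ {i, k}) := by
      ext a; simp; grind
    rw [masterPolyDiv, hM1, h, Finset.prod_insert (by simp), Nat.add_sub_cancel]
  have hFi : masterPolyDiv p g s i = (Polynomial.X - Polynomial.C (X i)) ^ M *
      ((Polynomial.X - Polynomial.C (X k)) ^ (M + 1) * P) := by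
    have h : (univ \ {i} : Finset (Fin (2*g+1))) = insert k (univ \ {i, k}) := by
      ext a; simp; grind
    rw [masterPolyDiv, hM1, h, Finset.prod_insert (by simp), Nat.add_sub_cancel]
  have hPd : zDeriv i P = 0 := by
    refine derivation_prod_eq_zero _ _ _ fun j hj => derivation_pow_eq_zero _ ?_ _
    have : i ≠ j := by rintro rfl; simp at hj
    simp [zDeriv_X_sub_C, this]
  have hkd : zDeriv i ((Polynomial.X - Polynomial.C (X k)) ^ M) = 0 :=
    derivation_pow_eq_zero _ (by simp [zDeriv_X_sub_C, hik]) _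
  have hid : zDeriv i ((Polynomial.X - Polynomial.C (X i)) ^ (M + 1)) =
      -((M : Polynomial (MvPolynomial (Fin (2*g+1)) ℤ)) + 1) *
        (Polynomial.X - Polynomial.C (X i)) ^ M := by
    rw [Derivation.leibniz_pow, zDeriv_X_sub_C]
    simp only [if_true, Nat.add_sub_cancel, smul_eq_mul, nsmul_eq_mul, Nat.cast_add, Nat.cast_one]
    ring
  refine ⟨-(Polynomial.C (X i - X k) * ((Polynomial.X - Polynomial.C (X k)) ^ M *
    (Polynomial.X - Polynomial.C (X i)) ^ M * P)), ?_⟩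
  rw [hFk, hFi, Derivation.leibniz, hkd, Derivation.leibniz, hPd, hid, hpR]
  simp only [smul_eq_mul, map_mul, map_sub, map_add, map_one, map_ofNat, map_natCast]
  ring

/-- the `p^s`-hypergeometric vectors `Q^{s,ℓ}`, `1 ≤ ℓ ≤ g`, satisfy the
KZ differential equations modulo `p^s` (with denominators cleared) in `ℤ[z_1,…,z_n]`. -/
theorem ps_hypergeometric_solves_KZ_mod_ps
    (g : ℕ) (hg : 1 ≤ g) (p : ℕ) (hp : p.Prime) (hodd : p ≠ 2)
    (s : ℕ) (hs : 1 ≤ s) (ℓ : ℕ) (hℓ1 : 1 ≤ ℓ) (hℓg : ℓ ≤ g) :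
    (∀ i k : Fin (2*g+1), i ≠ k →
      ((p : MvPolynomial (Fin (2*g+1)) ℤ) ^ s) ∣
        (2 * (X i - X k) * pderiv i (Qhyp p g s ℓ k)
          - (Qhyp p g s ℓ i - Qhyp p g s ℓ k))) ∧
    (∀ i : Fin (2*g+1),
      ((p : MvPolynomial (Fin (2*g+1)) ℤ) ^ s) ∣
        (2 * (∏ j ∈ univ \ {i}, (X i - X j)) * pderiv i (Qhyp p g s ℓ i)
          - ∑ j ∈ univ \ {i}, (Qhyp p g s ℓ j - Qhyp p g s ℓ i) *
              ∏ m ∈ (univ \ {i, j}), (X i - X m))) := by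
  have hoff : ∀ i k : Fin (2*g+1), i ≠ k →
      ((p : MvPolynomial (Fin (2*g+1)) ℤ) ^ s) ∣
        (2 * (X i - X k) * pderiv i (Qhyp p g s ℓ k)
          - (Qhyp p g s ℓ i - Qhyp p g s ℓ k)) := by
    intro i k hik
    obtain ⟨H, hH⟩ := offDiag_masterPolyDiv p g s hp hodd hs i k hik
    refine ⟨H.coeff (ℓ * p ^ s - 1), ?_⟩
    have := congrArg (fun f => Polynomial.coeff f (ℓ * p ^ s - 1)) hH
    simpa only [Polynomial.coeff_sub, Polynomial.coeff_C_mul, coeff_zDeriv, Qhyp] using this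
  refine ⟨hoff, fun i => ?_⟩
  have hsum : ((p : MvPolynomial (Fin (2*g+1)) ℤ) ^ s) ∣
      ∑ j, pderiv j (Qhyp p g s ℓ i) := by
    have h := congrArg (fun f => Polynomial.coeff f (ℓ * p ^ s - 1))
      (translation_masterPolyDiv p g s i)
    simp only [Polynomial.coeff_add, Polynomial.finsetSum_coeff, coeff_zDeriv,
      Polynomial.coeff_zero, Polynomial.coeff_derivative] at h
    have hpos : 1 ≤ ℓ * p ^ s := Nat.mul_pos hℓ1 (pow_pos hp.pos s)
    -- The exponent shift turns the factor `(ℓ p^s - 1) + 1` of the derivative into `ℓ p^s`.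
    have hcast : ((ℓ * p ^ s - 1 : ℕ) : MvPolynomial (Fin (2*g+1)) ℤ) + 1 =
        (ℓ : MvPolynomial (Fin (2*g+1)) ℤ) * (p : MvPolynomial (Fin (2*g+1)) ℤ) ^ s := by
      exact_mod_cast congrArg (Nat.cast (R := MvPolynomial (Fin (2*g+1)) ℤ))
        (Nat.sub_add_cancel hpos)
    rw [hcast] at h
    refine ⟨-((masterPolyDiv p g s i).coeff (ℓ * p ^ s - 1 + 1) * ℓ), ?_⟩
    unfold Qhyp
    linear_combination h
  -- Combination: `2 ∏ (z_i - z_j)` times the translation identity, plus the off-diagonal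
  -- equations for `∂_j Q_i`, each multiplied by the complementary product.
  have key : 2 * (∏ j ∈ univ \ {i}, (X i - X j)) * pderiv i (Qhyp p g s ℓ i)
          - ∑ j ∈ univ \ {i}, (Qhyp p g s ℓ j - Qhyp p g s ℓ i) *
              ∏ m ∈ (univ \ {i, j}), (X i - X m)
      = 2 * (∏ j ∈ univ \ {i}, (X i - X j)) * ∑ j, pderiv j (Qhyp p g s ℓ i)
        + ∑ j ∈ univ \ {i}, (2 * (X j - X i) * pderiv j (Qhyp p g s ℓ i)
          - (Qhyp p g s ℓ j - Qhyp p g s ℓ i)) * ∏ m ∈ (univ \ {i, j}), (X i - X m) := by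
    rw [← Finset.sum_sdiff (Finset.subset_univ {i})
      (f := fun j => pderiv j (Qhyp p g s ℓ i)), Finset.sum_singleton, mul_add, Finset.mul_sum,
      add_right_comm, ← Finset.sum_add_distrib, sub_eq_neg_add, ← Finset.sum_neg_distrib,
      add_left_inj]
    refine Finset.sum_congr rfl fun j hj => ?_
    have hset : (univ \ {i} : Finset (Fin (2*g+1))) = insert j (univ \ {i, j}) := by
      ext a; simp at hj ⊢; grind
    rw [hset, Finset.prod_insert (by simp)]
    ring
  rw [key]
  refine dvd_add (hsum.mul_left _) (Finset.dvd_sum fun j hj => (hoff j i ?_).mul_right _)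
  simpa using hj
end
end

section
/- For every integer s ≥ 1 and every ℓ ∈ {1,…,g}, the components of the p^s-hypergeometric vector sum to zero modulo p^s: Q^{s,ℓ}_1 + Q^{s,ℓ}_2 + ⋯ + Q^{s,ℓ}_n ≡ 0 (mod p^s) in ℤ[z_1,…,z_n]. -/
/-!
The polynomial `∑ᵢ Φ_s/(x - z_i)`, multiplied by `M = (p^s - 1)/2`, is the `x`-derivative of `Φ_s`
(`derivative_masterPoly`). The coefficient of `x^{ℓ p^s - 1}` in a derivative is a multiple of
`ℓ p^s`, so `p^s` divides `M * ∑ᵢ Q_i`. As `p^s = 2 M + 1`, we have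
`∑ᵢ Q_i = p^s * ∑ᵢ Q_i - 2 * (M * ∑ᵢ Q_i)`, and both terms on the right are divisible by `p^s`.
-/

noncomputable section
open MvPolynomial Finset

lemma derivative_masterPoly (p g s : ℕ) :
    Polynomial.derivative (masterPoly p g s) =
      Polynomial.C (((p ^ s - 1) / 2 : ℕ) : MvPolynomial (Fin (2*g+1)) ℤ) *
        ∑ i : Fin (2*g+1), masterPolyDiv p g s i := by
  unfold masterPoly masterPolyDiv
  rw [Polynomial.derivative_prod_finset, Finset.mul_sum]
  refine Finset.sum_congr rfl fun i _ => ?_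
  rw [Polynomial.derivative_X_sub_C_pow, Finset.sdiff_singleton_eq_erase, map_natCast]
  ring

/-- the components of the `p^s`-hypergeometric vector sum to zero
modulo `p^s` in `ℤ[z_1,…,z_n]`. -/
theorem ps_hypergeometric_components_sum_zero_mod_ps
    (g : ℕ) (hg : 1 ≤ g) (p : ℕ) (hp : p.Prime) (hodd : p ≠ 2)
    (s : ℕ) (hs : 1 ≤ s) (ℓ : ℕ) (hℓ1 : 1 ≤ ℓ) (hℓg : ℓ ≤ g) :
    ((p : MvPolynomial (Fin (2*g+1)) ℤ) ^ s) ∣ ∑ i : Fin (2*g+1), Qhyp p g s ℓ i := by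
  have hpow : p ^ s = 2 * ((p ^ s - 1) / 2) + 1 := by
    obtain ⟨k, hk⟩ := (hp.odd_of_ne_two hodd).pow (n := s)
    omega
  have hpos : 1 ≤ ℓ * p ^ s := Nat.mul_pos hℓ1 (pow_pos hp.pos s)
  have key := congrArg (fun f => f.coeff (ℓ * p ^ s - 1)) (derivative_masterPoly p g s)
  simp only [Polynomial.coeff_derivative, Polynomial.coeff_C_mul,
    Polynomial.finsetSum_coeff] at key
  change _ = _ * ∑ i : Fin (2*g+1), Qhyp p g s ℓ i at key
  rw [Nat.sub_add_cancel hpos, ← Nat.cast_succ, Nat.succ_eq_add_one,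
    Nat.sub_add_cancel hpos] at key
  have hcast := congrArg (Nat.cast : ℕ → MvPolynomial (Fin (2*g+1)) ℤ) hpow
  push_cast at hcast key
  generalize (((p ^ s - 1) / 2 : ℕ) : MvPolynomial (Fin (2*g+1)) ℤ) = M at key hcast
  refine ⟨∑ i : Fin (2*g+1), Qhyp p g s ℓ i - 2 * ((masterPoly p g s).coeff (ℓ * p ^ s) * ℓ), ?_⟩
  linear_combination 2 * key - (∑ i : Fin (2*g+1), Qhyp p g s ℓ i) * hcast
end
end

section
/- The determinant of the Hasse–Witt matrix A(z) has nonzero reduction modulo p: the image of det A(z) under the coefficientwise reduction map ℤ[z_1,…,z_n] → 𝔽_p[z_1,…,z_n] is a nonzero polynomial. -/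
/-!
Put `N = (p - 1) / 2`. Setting the last two variables to `0` turns `Φ_1` for `g + 1` into
`x ^ (p - 1) * F`, where `F` is `Φ_1` for `g`. In the Hasse–Witt matrix of `x ^ (p - 1) * F` the
first row is `(F(0), 0, …, 0)`, and deleting the first row and column leaves the coefficients of
`x ^ ((ℓ - 1) p - (m - 1))` in `F`, that is, the Hasse–Witt matrix of `F`
(`det_coeffMatrix_succ`). Hence `det A_{g+1}(z, 0, 0) = ± (∏ z_i) ^ N * det A_g(z)`, and since
`𝔽_p[z]` is a domain the determinant is nonzero by induction on `g`, starting from the empty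
determinant.

When `m > ℓ p`, which happens once `g > p`, the truncated exponent of `hasseWitt` reads off the
constant coefficient. The induction therefore runs on `coeffMatrix`, whose entries vanish there;
the two agree after the specialization, because `x ^ (p - 1) * F` has no constant term.
-/

noncomputable section
open MvPolynomial Finset

/-- The master polynomial `Φ_1(x,z) = ∏_{i=1}^n (x - z_i)^{(p-1)/2}`,
viewed as a polynomial in `x` over `ℤ[z_1,…,z_n]`, where `n = 2g+1`. -/
def masterPoly1 (p g : ℕ) : Polynomial (MvPolynomial (Fin (2*g+1)) ℤ) :=
  ∏ i : Fin (2*g+1), (Polynomial.X - Polynomial.C (X i)) ^ ((p - 1) / 2)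

/-- The Hasse–Witt matrix `A(z)`: the `g × g` matrix over `ℤ[z_1,…,z_n]` whose
`(ℓ,m)` entry (`1 ≤ ℓ,m ≤ g`, here indexed by `Fin g` via `ℓ ↦ ℓ+1`) is the coefficient
of `x^{ℓp − m}` in `Φ_1(x,z)`. -/
def hasseWitt (p g : ℕ) : Matrix (Fin g) (Fin g) (MvPolynomial (Fin (2*g+1)) ℤ) :=
  fun ℓ m => (masterPoly1 p g).coeff ((ℓ.1 + 1) * p - (m.1 + 1))

/-- The `g × g` matrix whose `(ℓ, m)` entry (`ℓ`, `m` counted from `1`) is the coefficient of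
`x ^ (ℓ p - m)` in `F`, read as `0` when the exponent is negative. -/
def coeffMatrix {R : Type*} [CommRing R] (F : Polynomial R) (p g : ℕ) :
    Matrix (Fin g) (Fin g) R :=
  fun l m => if m.1 + 1 ≤ (l.1 + 1) * p then F.coeff ((l.1 + 1) * p - (m.1 + 1)) else 0

/-- The first row of the left-hand matrix is `(F(0), 0, …, 0)`. -/
lemma det_coeffMatrix_succ {R : Type*} [CommRing R] (F : Polynomial R) (p g : ℕ) (hp : 0 < p) :
    (coeffMatrix (Polynomial.X ^ (p - 1) * F) p (g + 1)).det
      = F.coeff 0 * (coeffMatrix F p g).det := by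
  rw [Matrix.det_succ_row_zero, Fin.sum_univ_succ, Finset.sum_eq_zero, add_zero]
  · have h0 : coeffMatrix (Polynomial.X ^ (p - 1) * F) p (g + 1) 0 0 = F.coeff 0 := by
      have h1 : 1 ≤ p := hp
      simp [coeffMatrix, h1, Polynomial.coeff_X_pow_mul']
    have h1 : (coeffMatrix (Polynomial.X ^ (p - 1) * F) p (g + 1)).submatrix Fin.succ
        (Fin.succAbove 0) = coeffMatrix F p g := by
      ext l m
      simp only [coeffMatrix, Matrix.submatrix_apply, Fin.succAbove_zero, Fin.val_succ,
        Polynomial.coeff_X_pow_mul']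
      have e : (l.1 + 1 + 1) * p = (l.1 + 1) * p + p := by ring
      rw [e]
      by_cases h : m.1 + 1 ≤ (l.1 + 1) * p
      · rw [if_pos (by omega), if_pos (by omega), if_pos h]
        congr 1
        omega
      · rw [if_neg h]
        split_ifs <;> first | rfl | omega
    rw [h0, h1]
    simp
  · intro m _
    have : coeffMatrix (Polynomial.X ^ (p - 1) * F) p (g + 1) 0 m.succ = 0 := by
      simp only [coeffMatrix, Fin.val_succ, Fin.val_zero, Polynomial.coeff_X_pow_mul']
      split_ifs <;> first | rfl | omega
    rw [this]
    simp

/-- The reduction of `Φ_1` modulo `p`. -/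
def masterPolyMod (p g : ℕ) : Polynomial (MvPolynomial (Fin (2*g+1)) (ZMod p)) :=
  ∏ i : Fin (2*g+1), (Polynomial.X - Polynomial.C (X i)) ^ ((p - 1) / 2)

/-- The specialization of the last two variables to `0`. -/
def killTwo (p g : ℕ) :
    MvPolynomial (Fin (2*(g+1)+1)) (ZMod p) →+* MvPolynomial (Fin (2*g+1)) (ZMod p) :=
  (aeval (fun i : Fin (2*(g+1)+1) =>
    if h : i.1 < 2*g+1 then (X ⟨i.1, h⟩ : MvPolynomial (Fin (2*g+1)) (ZMod p)) else 0)).toRingHom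

lemma map_masterPolyMod (p g : ℕ) (hp : p.Prime) (hodd : p ≠ 2) :
    (masterPolyMod p (g+1)).map (killTwo p g) = Polynomial.X ^ (p - 1) * masterPolyMod p g := by
  have hX : ∀ i : Fin (2*(g+1)+1), killTwo p g (X i) =
      if h : i.1 < 2*g+1 then (X ⟨i.1, h⟩ : MvPolynomial (Fin (2*g+1)) (ZMod p)) else 0 := by
    intro i
    simp [killTwo]
  have hN : p - 1 = (p - 1) / 2 + (p - 1) / 2 := by
    have := hp.eq_two_or_odd
    omega
  simp only [masterPolyMod, Polynomial.map_prod, Polynomial.map_pow, Polynomial.map_sub,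
    Polynomial.map_X, Polynomial.map_C, hX]
  refine (Fin.prod_univ_castSucc (n := 2*g+1+1) _).trans ?_
  rw [Fin.prod_univ_castSucc (n := 2*g+1)]
  have hlt : ∀ x : Fin (2*g+1), x.1 < 2*g+1 := fun x => x.2
  have hsplit : (Polynomial.X : Polynomial (MvPolynomial (Fin (2*g+1)) (ZMod p))) ^ (p - 1)
      = Polynomial.X ^ ((p - 1) / 2) * Polynomial.X ^ ((p - 1) / 2) := by
    rw [← pow_add, ← hN]
  rw [hsplit]
  simp only [Fin.val_castSucc, Fin.val_last, hlt, dite_true, lt_irrefl, dite_false,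
    Nat.not_succ_lt_self, map_zero, sub_zero]
  ring

lemma coeff_zero_masterPolyMod_ne_zero (p g : ℕ) (hp : p.Prime) :
    (masterPolyMod p g).coeff 0 ≠ 0 := by
  have := Fact.mk hp
  rw [Polynomial.coeff_zero_eq_eval_zero, masterPolyMod, Polynomial.eval_prod,
    Finset.prod_ne_zero_iff]
  intro i _
  simp [X_ne_zero]

lemma map_coeffMatrix {R S : Type*} [CommRing R] [CommRing S] (f : R →+* S) (F : Polynomial R)
    (p g : ℕ) : f.mapMatrix (coeffMatrix F p g) = coeffMatrix (F.map f) p g := by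
  ext l m
  simp only [coeffMatrix, RingHom.mapMatrix_apply, Matrix.map_apply, Polynomial.coeff_map]
  split_ifs <;> simp

lemma det_coeffMatrix_masterPolyMod_ne_zero (p : ℕ) (hp : p.Prime) (hodd : p ≠ 2) (g : ℕ) :
    (coeffMatrix (masterPolyMod p g) p g).det ≠ 0 := by
  have := Fact.mk hp
  induction g with
  | zero => simp
  | succ g ih =>
    intro h
    have hkill := congrArg (killTwo p g) h
    rw [RingHom.map_det, map_coeffMatrix, map_masterPolyMod p g hp hodd,
      det_coeffMatrix_succ _ _ _ hp.pos, map_zero] at hkill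
    exact mul_ne_zero (coeff_zero_masterPolyMod_ne_zero p g hp) ih hkill

/-- the determinant of the Hasse–Witt matrix has nonzero reduction
modulo `p` in `𝔽_p[z_1,…,z_n]`. -/
theorem hasseWitt_det_ne_zero_mod_p
    (g : ℕ) (hg : 1 ≤ g) (p : ℕ) (hp : p.Prime) (hodd : p ≠ 2) :
    MvPolynomial.map (Int.castRingHom (ZMod p)) (hasseWitt p g).det ≠ 0 := by
  have := Fact.mk hp
  obtain ⟨g, rfl⟩ : ∃ k, g = k + 1 := ⟨g - 1, by omega⟩
  intro h
  have hF : (masterPoly1 p (g+1)).map (MvPolynomial.map (Int.castRingHom (ZMod p)))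
      = masterPolyMod p (g+1) := by
    simp [masterPoly1, masterPolyMod, Polynomial.map_prod]
  have hkill := congrArg (killTwo p g) h
  have hM : (killTwo p g).mapMatrix ((MvPolynomial.map (Int.castRingHom (ZMod p))).mapMatrix
      (hasseWitt p (g+1))) = coeffMatrix (Polynomial.X ^ (p - 1) * masterPolyMod p g) p (g+1) := by
    ext1 l m
    rw [← map_masterPolyMod p g hp hodd, ← hF]
    simp only [hasseWitt, coeffMatrix, RingHom.mapMatrix_apply, Matrix.map_apply,
      Polynomial.coeff_map]
    split_ifs with hlm
    · rfl
    -- a truncated exponent is `0`, and `x ^ (p - 1) * F` has no constant term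
    · rw [← Polynomial.coeff_map, ← Polynomial.coeff_map, hF, map_masterPolyMod p g hp hodd,
        Polynomial.coeff_X_pow_mul', if_neg]
      have := hp.two_le
      omega
  rw [RingHom.map_det, RingHom.map_det, hM, det_coeffMatrix_succ _ _ _ hp.pos, map_zero] at hkill
  exact mul_ne_zero (coeff_zero_masterPolyMod_ne_zero p g hp)
    (det_coeffMatrix_masterPolyMod_ne_zero p hp hodd g) hkill
end
end

section
/- The KZ connection is flat: regarding the Gaudin Hamiltonians H_i(z) = Σ_{j≠i} Ω_{ij}/(z_i − z_j) as n×n matrices with entries in the field of rational functions ℚ(z_1,…,z_n), one has (a) H_i(z) H_j(z) = H_j(z) H_i(z) for all i, j; (b) ∂_{z_i} H_j(z) = ∂_{z_j} H_i(z) for all i ≠ j; and (c) H_1(z) + ⋯ + H_n(z) = 0. -/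
/-!
Write `c i j = 1/(z_i - z_j)`. Since `0⁻¹ = 0`, also `c i i = 0`, so `H_i = Σ_j c i j • Ω_{ij}` with the
sum over all `j`. The coefficients are antisymmetric and satisfy Arnold's relation
`c i j * c j k + c j k * c k i + c k i * c i j = 0` for distinct `i, j, k`, while the matrices `Ω_{ij}` are
symmetric in `i, j` and satisfy the infinitesimal braid relations `[Ω_{ij}, Ω_{kl}] = 0` and
`[Ω_{ij}, Ω_{ik} + Ω_{jk}] = 0` for distinct indices.

For (a), only the terms of `[H_i, H_j]` whose index pairs `{i,k}`, `{j,l}` share exactly one index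
survive. Grouped by the third index `k`, they are multiples of the single commutator
`[Ω_{ij}, Ω_{jk}]`, with total coefficient zero by Arnold's relation (`sum_commute_of_braid`).
For (b), `∂_{z_i}` kills every term of `H_j` except `c j i • Ω_{ij}`, whose derivative
`(c j i)^2 • Ω_{ij}` is symmetric in `i, j`. For (c), the double sum is antisymmetric.
-/

noncomputable section
open MvPolynomial Finset

/-- The field `ℚ(z_1,…,z_n)` of rational functions, `n = 2g+1`. -/
abbrev RatField (g : ℕ) := FractionRing (MvPolynomial (Fin (2*g+1)) ℚ)

/-- The matrix `Ω_{ij}` (for `i ≠ j`): entries `(i,j)` and `(j,i)` equal `1`, entries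
`(i,i)` and `(j,j)` equal `-1`, all other entries `0`; here with entries in
`ℚ(z_1,…,z_n)`. -/
def OmegaMat (g : ℕ) (i j : Fin (2*g+1)) :
    Matrix (Fin (2*g+1)) (Fin (2*g+1)) (RatField g) :=
  fun k l =>
    if (k = i ∧ l = j) ∨ (k = j ∧ l = i) then 1
    else if (k = i ∧ l = i) ∨ (k = j ∧ l = j) then -1
    else 0

/-- The Gaudin Hamiltonian `H_i(z) = Σ_{j≠i} Ω_{ij}/(z_i − z_j)`, an `n × n` matrix
with entries in `ℚ(z_1,…,z_n)`. -/
def gaudin (g : ℕ) (i : Fin (2*g+1)) :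
    Matrix (Fin (2*g+1)) (Fin (2*g+1)) (RatField g) :=
  ∑ j ∈ univ \ {i},
    (algebraMap (MvPolynomial (Fin (2*g+1)) ℚ) (RatField g) (X i - X j))⁻¹ • OmegaMat g i j

/-- Commutation of Hamiltonians `Σ_k c i k • t i k` from the infinitesimal braid relations for `t`
and Arnold's relation for `c`. -/
lemma sum_commute_of_braid {ι K A : Type*} [Fintype ι] [DecidableEq ι] [Field K] [Ring A]
    [Algebra K A] (c : ι → ι → K) (t : ι → ι → A)
    (c_self : ∀ i, c i i = 0) (c_anti : ∀ i j, c j i = - c i j)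
    (arnold : ∀ i j k, i ≠ j → i ≠ k → j ≠ k →
      c i j * c j k + c j k * c k i + c k i * c i j = 0)
    (t_symm : ∀ i j, t j i = t i j)
    (t_disj : ∀ i j k l, i ≠ j → k ≠ l → i ≠ k → i ≠ l → j ≠ k → j ≠ l →
      t i j * t k l = t k l * t i j)
    (t_braid : ∀ i j k, i ≠ j → i ≠ k → j ≠ k →
      t i j * (t i k + t j k) = (t i k + t j k) * t i j)
    (i j : ι) :
    (∑ k, c i k • t i k) * (∑ k, c j k • t j k) =
      (∑ k, c j k • t j k) * (∑ k, c i k • t i k) := by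
  by_cases hij : i = j
  · rw [hij]
  let f : ι → ι → A := fun k l => (c i k * c j l) • (t i k * t j l - t j l * t i k)
  have expand : (∑ k, c i k • t i k) * (∑ k, c j k • t j k) -
      (∑ k, c j k • t j k) * (∑ k, c i k • t i k) = ∑ k, ∑ l, f k l := by
    rw [Finset.sum_mul_sum, Finset.sum_mul_sum,
      Finset.sum_comm (f := fun k l => (c j k • t j k) * (c i l • t i l)),
      ← Finset.sum_sub_distrib]
    refine Finset.sum_congr rfl fun k _ => ?_
    rw [← Finset.sum_sub_distrib]
    refine Finset.sum_congr rfl fun l _ => ?_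
    simp only [f, smul_mul_smul_comm, smul_sub, mul_comm (c j l)]
  have f_i : ∀ l, f i l = 0 := fun l => by simp [f, c_self]
  have f_j : ∀ k, f k j = 0 := fun k => by simp [f, c_self]
  have f_ji : f j i = 0 := by simp [f, t_symm i j]
  -- Only pairs sharing an index contribute; the overlaps of the three cases vanish.
  have split : ∀ k l, f k l =
      (if l = i then f k i else 0) + (if l = k then f k k else 0) +
        (if k = j then f j l else 0) := by
    intro k l
    by_cases hki : k = i
    · subst hki; simp [f_i, hij]
    by_cases hlj : l = j
    · subst hlj
      by_cases hk : l = k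
      · subst hk; simp [f_j, f_ji]
      · simp [f_j, Ne.symm hij, hk]
    by_cases hkj : k = j
    · subst hkj; simp [hlj, f_ji]
    by_cases hli : l = i
    · subst hli; simp [hkj, Ne.symm hki]
    by_cases hlk : l = k
    · subst hlk; simp [hli, hkj]
    · have h := t_disj i k j l (Ne.symm hki) (Ne.symm hlj) hij (Ne.symm hli) hkj (Ne.symm hlk)
      simp [hli, hlk, hkj, f, h]
  have group : ∑ k, ∑ l, f k l = ∑ k, (f k i + f k k + f j k) := by
    rw [Finset.sum_congr rfl fun k _ => Finset.sum_congr rfl fun l _ => split k l]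
    simp only [Finset.sum_add_distrib, Finset.sum_ite_eq', Finset.mem_univ, if_true]
    rw [Finset.sum_comm (f := fun k l => if k = j then f j l else 0)]
    simp only [Finset.sum_ite_eq', Finset.mem_univ, if_true]
  rw [← sub_eq_zero, expand, group]
  refine Finset.sum_eq_zero fun k _ => ?_
  by_cases hki : k = i
  · subst hki; simp [f_i, f_ji]
  by_cases hkj : k = j
  · subst hkj; simp [f_j, f_ji]
  have b1 := t_braid i j k hij (Ne.symm hki) (Ne.symm hkj)
  have b2 := t_braid j k i (Ne.symm hkj) (Ne.symm hij) hki
  rw [t_symm i j, t_symm i k] at b2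
  -- All three commutators are multiples of `[t i j, t j k]`.
  have e1 : t i k * t i j - t i j * t i k = t i j * t j k - t j k * t i j := by
    rw [mul_add, add_mul] at b1
    rw [sub_eq_sub_iff_add_eq_add, add_comm, add_comm (t j k * _), ← b1, add_comm]
  have e2 : t i k * t j k - t j k * t i k = -(t i j * t j k - t j k * t i j) := by
    rw [mul_add, add_mul] at b2
    rw [neg_sub, sub_eq_sub_iff_add_eq_add, add_comm, ← b2, add_comm]
  have har := arnold i j k hij (Ne.symm hki) (Ne.symm hkj)
  simp only [f, t_symm i j]
  rw [e1, e2, smul_neg, ← neg_smul, ← add_smul, ← add_smul]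
  rw [c_anti i k] at har
  have : c i k * c j i + -(c i k * c j k) + c i j * c j k = 0 := by
    rw [c_anti i j]; linear_combination har
  rw [this, zero_smul]

/-- The coefficient `1/(z_i - z_j)`; it is `0` when `i = j`. -/
def kzCoeff (g : ℕ) (i j : Fin (2*g+1)) : RatField g :=
  (algebraMap (MvPolynomial (Fin (2*g+1)) ℚ) (RatField g) (X i - X j))⁻¹

lemma kzCoeff_self (g : ℕ) (i : Fin (2*g+1)) : kzCoeff g i i = 0 := by
  simp [kzCoeff]

lemma kzCoeff_anti (g : ℕ) (i j : Fin (2*g+1)) : kzCoeff g j i = - kzCoeff g i j := by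
  rw [kzCoeff, kzCoeff, ← inv_neg, ← map_neg, neg_sub]

lemma algebraMap_X_sub_X_ne_zero (g : ℕ) {i j : Fin (2*g+1)} (h : i ≠ j) :
    algebraMap (MvPolynomial (Fin (2*g+1)) ℚ) (RatField g) (X i - X j) ≠ 0 := by
  rw [Ne, FaithfulSMul.algebraMap_eq_zero_iff, sub_eq_zero]
  exact fun e => h (X_injective e)

lemma kzCoeff_arnold (g : ℕ) (i j k : Fin (2*g+1)) (hij : i ≠ j) (hik : i ≠ k) (hjk : j ≠ k) :
    kzCoeff g i j * kzCoeff g j k + kzCoeff g j k * kzCoeff g k i +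
      kzCoeff g k i * kzCoeff g i j = 0 := by
  have h1 := algebraMap_X_sub_X_ne_zero g hij
  have h2 := algebraMap_X_sub_X_ne_zero g hjk
  have h3 := algebraMap_X_sub_X_ne_zero g (Ne.symm hik)
  simp only [kzCoeff]
  rw [map_sub] at *
  rw [map_sub] at *
  rw [map_sub] at *
  field_simp
  ring

lemma gaudin_eq_sum (g : ℕ) (i : Fin (2*g+1)) :
    gaudin g i = ∑ j, kzCoeff g i j • OmegaMat g i j := by
  rw [gaudin]
  refine Finset.sum_subset (Finset.subset_univ _) fun j _ hj => ?_
  have : j = i := by simpa using hj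
  subst this
  simp

lemma OmegaMat_symm (g : ℕ) (i j : Fin (2*g+1)) : OmegaMat g j i = OmegaMat g i j := by
  ext k l
  simp only [OmegaMat, or_comm]

lemma OmegaMat_eq_single (g : ℕ) {i j : Fin (2*g+1)} (h : i ≠ j) :
    OmegaMat g i j = Matrix.single i j 1 + Matrix.single j i 1
      - Matrix.single i i 1 - Matrix.single j j 1 := by
  ext k l
  simp only [OmegaMat, Matrix.single, Matrix.sub_apply, Matrix.add_apply, Matrix.of_apply]
  grind

lemma OmegaMat_disj (g : ℕ) (i j k l : Fin (2*g+1)) (hij : i ≠ j) (hkl : k ≠ l) (hik : i ≠ k)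
    (hil : i ≠ l) (hjk : j ≠ k) (hjl : j ≠ l) :
    OmegaMat g i j * OmegaMat g k l = OmegaMat g k l * OmegaMat g i j := by
  rw [OmegaMat_eq_single g hij, OmegaMat_eq_single g hkl]
  simp [mul_add, add_mul, mul_sub, sub_mul, Matrix.single_mul_single_of_ne, hik, hil, hjk, hjl,
    hik.symm, hil.symm, hjk.symm, hjl.symm]

lemma OmegaMat_braid (g : ℕ) (i j k : Fin (2*g+1)) (hij : i ≠ j) (hik : i ≠ k) (hjk : j ≠ k) :
    OmegaMat g i j * (OmegaMat g i k + OmegaMat g j k) =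
      (OmegaMat g i k + OmegaMat g j k) * OmegaMat g i j := by
  rw [OmegaMat_eq_single g hij, OmegaMat_eq_single g hik, OmegaMat_eq_single g hjk]
  simp only [mul_add, add_mul, mul_sub, sub_mul, Matrix.single_mul_single_same, mul_one,
    Matrix.single_mul_single_of_ne _ _ _ _ hij, Matrix.single_mul_single_of_ne _ _ _ _ hik,
    Matrix.single_mul_single_of_ne _ _ _ _ hjk, Matrix.single_mul_single_of_ne _ _ _ _ hij.symm,
    Matrix.single_mul_single_of_ne _ _ _ _ hik.symm,
    Matrix.single_mul_single_of_ne _ _ _ _ hjk.symm]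
  abel

lemma derivation_OmegaMat (g : ℕ) (d : Derivation ℚ (RatField g) (RatField g))
    (i j a b : Fin (2*g+1)) : d (OmegaMat g i j a b) = 0 := by
  simp only [OmegaMat]
  split_ifs <;> simp

/-- `∂_{z_i} H_j = (z_j - z_i)⁻² Ω_{ji}` for `i ≠ j`. -/
lemma map_derivation_gaudin (g : ℕ)
    (D : Fin (2*g+1) → Derivation ℚ (RatField g) (RatField g))
    (hD : ∀ i j : Fin (2*g+1),
      D i (algebraMap (MvPolynomial (Fin (2*g+1)) ℚ) (RatField g) (X j)) =
        if i = j then 1 else 0) (i j : Fin (2*g+1)) (hij : i ≠ j) :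
    (gaudin g j).map (D i) = (kzCoeff g j i) ^ 2 • OmegaMat g j i := by
  have hc : ∀ k, D i (kzCoeff g j k) = if k = i then (kzCoeff g j i) ^ 2 else 0 := by
    intro k
    rw [kzCoeff, Derivation.leibniz_inv, map_sub, map_sub, hD, hD, if_neg hij]
    by_cases hk : k = i
    · subst hk; simp [kzCoeff]
    · simp [hk, Ne.symm hk]
  ext a b
  rw [gaudin_eq_sum, Matrix.map_apply, Matrix.sum_apply, map_sum]
  simp [Derivation.leibniz, derivation_OmegaMat, hc, mul_comm]

/-- the KZ connection is flat. Here `∂_{z_i}` is (entrywise application of)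
any family `D` of `ℚ`-derivations of `ℚ(z_1,…,z_n)` with `D_i z_j = δ_{ij}` (such a
family exists and is unique). Then (a) the Gaudin Hamiltonians commute,
(b) `∂_{z_i} H_j = ∂_{z_j} H_i` for `i ≠ j`, and (c) `H_1 + ⋯ + H_n = 0`. -/
theorem KZ_connection_is_flat
    (g : ℕ) (hg : 1 ≤ g)
    (D : Fin (2*g+1) → Derivation ℚ (RatField g) (RatField g))
    (hD : ∀ i j : Fin (2*g+1),
      D i (algebraMap (MvPolynomial (Fin (2*g+1)) ℚ) (RatField g) (X j)) =
        if i = j then 1 else 0) :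
    (∀ i j : Fin (2*g+1), gaudin g i * gaudin g j = gaudin g j * gaudin g i) ∧
    (∀ i j : Fin (2*g+1), i ≠ j →
      (gaudin g j).map (D i) = (gaudin g i).map (D j)) ∧
    (∑ i : Fin (2*g+1), gaudin g i = 0) := by
  refine ⟨fun i j => ?_, fun i j hij => ?_, ?_⟩
  · rw [gaudin_eq_sum, gaudin_eq_sum]
    exact sum_commute_of_braid (kzCoeff g) (OmegaMat g) (kzCoeff_self g) (kzCoeff_anti g)
      (kzCoeff_arnold g) (OmegaMat_symm g) (OmegaMat_disj g) (OmegaMat_braid g) i j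
  · rw [map_derivation_gaudin g D hD i j hij, map_derivation_gaudin g D hD j i hij.symm,
      OmegaMat_symm g i j, kzCoeff_anti g i j, neg_sq]
  · simp_rw [gaudin_eq_sum]
    have h : ∑ i, ∑ j, kzCoeff g i j • OmegaMat g i j =
        -∑ i, ∑ j, kzCoeff g i j • OmegaMat g i j := by
      conv_lhs => rw [Finset.sum_comm]
      simp_rw [← Finset.sum_neg_distrib]
      refine Finset.sum_congr rfl fun i _ => Finset.sum_congr rfl fun j _ => ?_
      rw [kzCoeff_anti g i j, OmegaMat_symm g i j, neg_smul]
    ext a b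
    have hab := congrFun (congrFun h a) b
    rw [Matrix.neg_apply] at hab
    exact self_eq_neg.mp hab
end
end
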